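/- Let p be a positive integer that is a perfect square, i.e. √p is an integer. Then there exists a strictly isomorphic rectangle partition pair for (p, p+1) of size 2·√p + 2. -/

import Mathlib

open scoped Classical

/-- An axis-parallel rectangle in the plane, given by its coordinates. -/
structure Rect where
  x1 : ℝ
  x2 : ℝ
  y1 : ℝ
  y2 : ℝ

namespace Rect

/-- The horizontal side length. -/
def width (r : Rect) : ℝ := r.x2 - r.x1

/-- The vertical side length. -/
def height (r : Rect) : ℝ := r.y2 - r.y1

/-- The closed rectangle as a set of points. -/
def carrier (r : Rect) : Set (ℝ × ℝ) := Set.Icc r.x1 r.x2 ×ˢ Set.Icc r.y1 r.y2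

/-- The interior of the rectangle. -/
def inner (r : Rect) : Set (ℝ × ℝ) := Set.Ioo r.x1 r.x2 ×ˢ Set.Ioo r.y1 r.y2

/-- The rectangle is nondegenerate. -/
def Nondeg (r : Rect) : Prop := r.x1 < r.x2 ∧ r.y1 < r.y2

end Rect

/-- `P` is a rectangle partition of `[0, W] × [0, H]`: finitely many nondegenerate
rectangles with pairwise disjoint interiors whose union is `[0, W] × [0, H]`. -/
def IsRectPartition {k : ℕ} (W H : ℝ) (P : Fin k → Rect) : Prop :=
  (∀ i, (P i).Nondeg) ∧
  (∀ i j : Fin k, i ≠ j → (P i).inner ∩ (P j).inner = ∅) ∧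
  (⋃ i, (P i).carrier) = Set.Icc (0 : ℝ) W ×ˢ Set.Icc (0 : ℝ) H

/-- `P1`, `P2`, `σ` form a strictly isomorphic rectangle partition pair between the
rectangles `a × b` and `c × d`: matched modules have equal width and equal height. -/
def IsStrictIsoPair (a b c d : ℝ) {k : ℕ} (P1 P2 : Fin k → Rect)
    (σ : Equiv.Perm (Fin k)) : Prop :=
  IsRectPartition a b P1 ∧ IsRectPartition c d P2 ∧
  ∀ i, (P1 i).width = (P2 (σ i)).width ∧ (P1 i).height = (P2 (σ i)).height

/-- There is a strictly isomorphic rectangle partition pair between `a × b` and `c × d`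
of size `k`. -/
def StrictPairGen (a b c d : ℝ) (k : ℕ) : Prop :=
  ∃ (P1 P2 : Fin k → Rect) (σ : Equiv.Perm (Fin k)), IsStrictIsoPair a b c d P1 P2 σ

/-- A strictly isomorphic rectangle partition pair for `(p, q)` of size `k`:
partitions of `[0,p] × [0,q]` and `[0,q] × [0,p]` with a matching preserving
widths and heights. -/
def StrictPair (p q : ℝ) (k : ℕ) : Prop := StrictPairGen p q q p k

/-- An isomorphic rectangle partition pair (rotation allowed) between `a × b` and
`c × d` of size `k`: matched modules have the same unordered pair of side lengths. -/
def IsoPairRot (a b c d : ℝ) (k : ℕ) : Prop :=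
  ∃ (P1 P2 : Fin k → Rect) (σ : Equiv.Perm (Fin k)),
    IsRectPartition a b P1 ∧ IsRectPartition c d P2 ∧
    ∀ i, ((P1 i).width = (P2 (σ i)).width ∧ (P1 i).height = (P2 (σ i)).height) ∨
         ((P1 i).width = (P2 (σ i)).height ∧ (P1 i).height = (P2 (σ i)).width)

/-- A slat rectangle partition: if horizontal sides of two modules lie on the same
horizontal line and overlap in more than one point, they are identical segments. -/
def IsSlat {k : ℕ} (P : Fin k → Rect) : Prop :=
  ∀ i j : Fin k, ∀ yi ∈ ({(P i).y1, (P i).y2} : Set ℝ),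
    ∀ yj ∈ ({(P j).y1, (P j).y2} : Set ℝ), yi = yj →
      max (P i).x1 (P j).x1 < min (P i).x2 (P j).x2 →
      (P i).x1 = (P j).x1 ∧ (P i).x2 = (P j).x2

lemma aux_cover (r : ℕ) (hr : 0 < r) (x : ℝ) (h0 : 0 ≤ x) (h1 : x ≤ r) :
    ∃ i : Fin r, (i : ℝ) ≤ x ∧ x ≤ (i : ℝ) + 1 := by
  rcases eq_or_lt_of_le h1 with h | h
  · refine ⟨⟨r - 1, by omega⟩, ?_⟩
    have : ((r - 1 : ℕ) : ℝ) = r - 1 := by push_cast [Nat.one_le_iff_ne_zero.mpr hr.ne']; ring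
    simp only [this]
    constructor <;> linarith
  · refine ⟨⟨⌊x⌋₊, (Nat.floor_lt h0).2 h⟩, Nat.floor_le h0, (Nat.lt_floor_add_one x).le⟩

lemma aux_cover_mul (r : ℕ) (hr : 0 < r) (x : ℝ) (h0 : 0 ≤ x) (h1 : x ≤ (r : ℝ) * r) :
    ∃ i : Fin r, (i : ℝ) * r ≤ x ∧ x ≤ ((i : ℝ) + 1) * r := by
  have hr' : (0 : ℝ) < r := by exact_mod_cast hr
  obtain ⟨i, h2, h3⟩ := aux_cover r hr (x / r) (by positivity) ((div_le_iff₀ hr').2 h1)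
  exact ⟨i, (le_div_iff₀ hr').1 h2, (div_le_iff₀ hr').1 h3⟩

lemma aux_disj (r : ℕ) (i j : Fin r) (h : i ≠ j) (x : ℝ) (h1 : (i : ℝ) < x) (h2 : x < i + 1)
    (h3 : (j : ℝ) < x) (h4 : x < j + 1) : False := by
  apply h
  have a : (i : ℝ) < j + 1 := by linarith
  have b : (j : ℝ) < i + 1 := by linarith
  have a' : (i : ℕ) < j + 1 := by exact_mod_cast a
  have b' : (j : ℕ) < i + 1 := by exact_mod_cast b
  exact Fin.ext (by omega)

lemma aux_disj_mul (r : ℕ) (i j : Fin r) (h : i ≠ j) (x : ℝ) (h1 : (i : ℝ) * r < x)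
    (h2 : x < (i + 1) * r) (h3 : (j : ℝ) * r < x) (h4 : x < (j + 1) * r) : False := by
  have hr' : (0 : ℝ) < r := by exact_mod_cast i.pos
  exact aux_disj r i j h (x / r) ((lt_div_iff₀ hr').2 h1) ((div_lt_iff₀ hr').2 h2)
    ((lt_div_iff₀ hr').2 h3) ((div_lt_iff₀ hr').2 h4)

/-- Partition over a general index type. -/
def IsRP {ι : Type} (W H : ℝ) (P : ι → Rect) : Prop :=
  (∀ i, (P i).Nondeg) ∧
  (∀ i j : ι, i ≠ j → ∀ x y : ℝ, (P i).x1 < x → x < (P i).x2 → (P i).y1 < y → y < (P i).y2 →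
    (P j).x1 < x → x < (P j).x2 → (P j).y1 < y → y < (P j).y2 → False) ∧
  (∀ i, 0 ≤ (P i).x1 ∧ (P i).x2 ≤ W ∧ 0 ≤ (P i).y1 ∧ (P i).y2 ≤ H) ∧
  (∀ x y : ℝ, 0 ≤ x → x ≤ W → 0 ≤ y → y ≤ H →
    ∃ i, (P i).x1 ≤ x ∧ x ≤ (P i).x2 ∧ (P i).y1 ≤ y ∧ y ≤ (P i).y2)

lemma IsRP.toPart {ι : Type} {W H : ℝ} {P : ι → Rect} (h : IsRP W H P) {k : ℕ}
    (e : Fin k ≃ ι) : IsRectPartition W H (fun i => P (e i)) := by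
  obtain ⟨h1, h2, h3, h4⟩ := h
  refine ⟨fun i => h1 _, ?_, ?_⟩
  · intro i j hij
    ext ⟨x, y⟩
    simp only [Rect.inner, Set.mem_inter_iff, Set.mem_prod, Set.mem_Ioo, Set.mem_empty_iff_false,
      iff_false]
    rintro ⟨⟨⟨a, b⟩, c, d⟩, ⟨a', b'⟩, c', d'⟩
    exact h2 (e i) (e j) (fun hh => hij (e.injective hh)) x y a b c d a' b' c' d'
  · ext ⟨x, y⟩
    simp only [Rect.carrier, Set.mem_iUnion, Set.mem_prod, Set.mem_Icc]
    constructor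
    · rintro ⟨i, ⟨a, b⟩, c, d⟩
      obtain ⟨a', b', c', d'⟩ := h3 (e i)
      exact ⟨⟨by linarith, by linarith⟩, by linarith, by linarith⟩
    · rintro ⟨⟨a, b⟩, c, d⟩
      obtain ⟨i, a', b', c', d'⟩ := h4 x y a b c d
      exact ⟨e.symm i, by simp [*]⟩

lemma pair_of_IsRP {ι : Type} [Fintype ι] {a b c d : ℝ} {P Q : ι → Rect} (hP : IsRP a b P)
    (hQ : IsRP c d Q) (h : ∀ i, (P i).width = (Q i).width ∧ (P i).height = (Q i).height) {k : ℕ}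
    (hk : Fintype.card ι = k) : StrictPairGen a b c d k := by
  let e := (Fintype.equivFinOfCardEq hk).symm
  exact ⟨_, _, Equiv.refl _, hP.toPart e, hQ.toPart e, fun i => h (e i)⟩

def part1 (r : ℕ) : (Fin r ⊕ Fin r) ⊕ Bool → Rect
  | .inl (.inl i) => ⟨i, i + 1, 0, r⟩
  | .inl (.inr i) => ⟨i * r, (i + 1) * r, r * r, r * r + 1⟩
  | .inr false => ⟨r, r * r, 0, r⟩
  | .inr true => ⟨0, r * r, r, r * r⟩

def part2 (r : ℕ) : (Fin r ⊕ Fin r) ⊕ Bool → Rect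
  | .inl (.inl i) => ⟨r * r, r * r + 1, i * r, (i + 1) * r⟩
  | .inl (.inr i) => ⟨0, r, i, i + 1⟩
  | .inr false => ⟨r, r * r, 0, r⟩
  | .inr true => ⟨0, r * r, r, r * r⟩

lemma part1_ok (r : ℕ) (hr : 2 ≤ r) : IsRP ((r : ℝ) * r) ((r : ℝ) * r + 1) (part1 r) := by
  have hR : (2 : ℝ) ≤ r := by exact_mod_cast hr
  have hRR : (r : ℝ) < r * r := by nlinarith
  have hi : ∀ i : Fin r, (0 : ℝ) ≤ i ∧ (i : ℝ) + 1 ≤ r := fun i =>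
    ⟨by positivity, by exact_mod_cast i.2⟩
  have hi2 : ∀ i : Fin r, (0 : ℝ) ≤ i * r ∧ ((i : ℝ) + 1) * r ≤ r * r := fun i =>
    ⟨by positivity, by nlinarith [hi i]⟩
  refine ⟨?_, ?_, ?_, ?_⟩
  · rintro ((i | i) | (_ | _)) <;> simp only [part1, Rect.Nondeg] <;> constructor <;> nlinarith
  · rintro ((i | i) | (_ | _)) ((j | j) | (_ | _)) hij x y <;> simp only [part1] <;>
      intro a b c d a' b' c' d'
    · exact aux_disj r i j (by simpa using hij) x a b a' b'
    · linarith
    · linarith [hi i]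
    · linarith
    · linarith
    · exact aux_disj_mul r i j (by simpa using hij) x a b a' b'
    · linarith
    · linarith
    · linarith [hi j]
    · linarith
    · exact hij rfl
    · linarith
    · linarith
    · linarith
    · linarith
    · exact hij rfl
  · rintro ((i | i) | (_ | _)) <;> simp only [part1] <;> refine ⟨?_, ?_, ?_, ?_⟩ <;>
      first
      | nlinarith
      | nlinarith [hi i, hi2 i]
  · intro x y a b c d
    rcases le_total y (r * r) with h | h
    · rcases le_total y r with h' | h'
      · rcases le_total x r with h'' | h''
        · obtain ⟨i, u, v⟩ := aux_cover r (by omega) x a h''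
          exact ⟨.inl (.inl i), u, v, c, h'⟩
        · exact ⟨.inr false, h'', b, c, h'⟩
      · exact ⟨.inr true, a, b, h', h⟩
    · obtain ⟨i, u, v⟩ := aux_cover_mul r (by omega) x a b
      exact ⟨.inl (.inr i), u, v, h, d⟩

lemma part2_ok (r : ℕ) (hr : 2 ≤ r) : IsRP ((r : ℝ) * r + 1) ((r : ℝ) * r) (part2 r) := by
  have hR : (2 : ℝ) ≤ r := by exact_mod_cast hr
  have hRR : (r : ℝ) < r * r := by nlinarith
  have hi : ∀ i : Fin r, (0 : ℝ) ≤ i ∧ (i : ℝ) + 1 ≤ r := fun i =>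
    ⟨by positivity, by exact_mod_cast i.2⟩
  have hi2 : ∀ i : Fin r, (0 : ℝ) ≤ i * r ∧ ((i : ℝ) + 1) * r ≤ r * r := fun i =>
    ⟨by positivity, by nlinarith [hi i]⟩
  refine ⟨?_, ?_, ?_, ?_⟩
  · rintro ((i | i) | (_ | _)) <;> simp only [part2, Rect.Nondeg] <;> constructor <;> nlinarith
  · rintro ((i | i) | (_ | _)) ((j | j) | (_ | _)) hij x y <;> simp only [part2] <;>
      intro a b c d a' b' c' d'
    · exact aux_disj_mul r i j (by simpa using hij) y c d c' d'
    · linarith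
    · linarith
    · linarith
    · linarith
    · exact aux_disj r i j (by simpa using hij) y c d c' d'
    · linarith
    · linarith [hi i]
    · linarith
    · linarith
    · exact hij rfl
    · linarith
    · linarith
    · linarith [hi j]
    · linarith
    · exact hij rfl
  · rintro ((i | i) | (_ | _)) <;> simp only [part2] <;> refine ⟨?_, ?_, ?_, ?_⟩ <;>
      first
      | nlinarith
      | nlinarith [hi i, hi2 i]
  · intro x y a b c d
    rcases le_total x (r * r) with h | h
    · rcases le_total y r with h' | h'
      · rcases le_total x r with h'' | h''
        · obtain ⟨i, u, v⟩ := aux_cover r (by omega) y c h'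
          exact ⟨.inl (.inr i), a, h'', u, v⟩
        · exact ⟨.inr false, h'', h, c, h'⟩
      · exact ⟨.inr true, a, h, h', d⟩
    · obtain ⟨i, u, v⟩ := aux_cover_mul r (by omega) y c d
      exact ⟨.inl (.inl i), h, b, u, v⟩

noncomputable def one1 : Bool × Bool → Rect
  | (false, false) => ⟨0, 1, 0, 1/2⟩
  | (false, true) => ⟨0, 1, 1/2, 1⟩
  | (true, false) => ⟨0, 1, 1, 3/2⟩
  | (true, true) => ⟨0, 1, 3/2, 2⟩

noncomputable def one2 : Bool × Bool → Rect
  | (false, false) => ⟨0, 1, 0, 1/2⟩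
  | (false, true) => ⟨0, 1, 1/2, 1⟩
  | (true, false) => ⟨1, 2, 0, 1/2⟩
  | (true, true) => ⟨1, 2, 1/2, 1⟩

lemma one1_ok : IsRP 1 2 one1 := by
  refine ⟨?_, ?_, ?_, ?_⟩
  · rintro ⟨_ | _, _ | _⟩ <;> norm_num [one1, Rect.Nondeg]
  · rintro ⟨_ | _, _ | _⟩ ⟨_ | _, _ | _⟩ hij x y <;> simp only [one1] <;> intros <;>
      first
      | exact hij rfl
      | linarith
  · rintro ⟨_ | _, _ | _⟩ <;> norm_num [one1]
  · intro x y a b c d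
    rcases le_total y 1 with h | h
    · rcases le_total y (1/2) with h' | h'
      · exact ⟨(false, false), a, b, c, h'⟩
      · exact ⟨(false, true), a, b, h', h⟩
    · rcases le_total y (3/2) with h' | h'
      · exact ⟨(true, false), a, b, h, h'⟩
      · exact ⟨(true, true), a, b, h', d⟩

lemma one2_ok : IsRP 2 1 one2 := by
  refine ⟨?_, ?_, ?_, ?_⟩
  · rintro ⟨_ | _, _ | _⟩ <;> norm_num [one2, Rect.Nondeg]
  · rintro ⟨_ | _, _ | _⟩ ⟨_ | _, _ | _⟩ hij x y <;> simp only [one2] <;> intros <;>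
      first
      | exact hij rfl
      | linarith
  · rintro ⟨_ | _, _ | _⟩ <;> norm_num [one2]
  · intro x y a b c d
    rcases le_total x 1 with h | h
    · rcases le_total y (1/2) with h' | h'
      · exact ⟨(false, false), a, h, c, h'⟩
      · exact ⟨(false, true), a, h, h', d⟩
    · rcases le_total y (1/2) with h' | h'
      · exact ⟨(true, false), h, b, c, h'⟩
      · exact ⟨(true, true), h, b, h', d⟩

/-- If `p = r²` is a perfect square, `SIRTP(p, p+1)` has a solution of size `2√p + 2`. -/
theorem sirtp_square_transfer_perfect_square (p r : ℕ) (hp : 0 < p) (hr : r * r = p) :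
    StrictPair (p : ℝ) ((p : ℝ) + 1) (2 * r + 2) := by
  subst hr
  have hr0 : 0 < r := Nat.pos_of_mul_pos_left hp
  rcases (by omega : r = 1 ∨ 2 ≤ r) with h | h
  · subst h
    have := pair_of_IsRP one1_ok one2_ok (k := 4)
      (by rintro ⟨_ | _, _ | _⟩ <;> norm_num [one1, one2, Rect.width, Rect.height]) (by simp)
    unfold StrictPair
    norm_num
    exact this
  · unfold StrictPair
    push_cast
    refine pair_of_IsRP (part1_ok r h) (part2_ok r h) ?_ (by simp; ring)
    rintro ((i | i) | (_ | _)) <;> simp only [part1, part2, Rect.width, Rect.height] <;>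
      constructor <;> first | trivial | ring
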